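/- arXiv:1603.01885 — 2 statements merged into one kernel-verified Lean document; each statement's English description precedes it below -/
import Mathlib

section
/- Let S be a finite totally ordered set, d ≥ 1, and N ≥ 2. Let (P^1, ..., P^N) be an N-tuple of (local) PCA dynamics on S^{Z^d}. Then there exists an increasing synchronous coupling of (P^1, ..., P^N) if and only if the N-tuple (P^1, ..., P^N) is increasing, i.e. ζ^1 ⪯ ζ^2 ⪯ ... ⪯ ζ^N implies P^1(·|ζ^1) ⪯ P^2(·|ζ^2) ⪯ ... ⪯ P^N(·|ζ^N) in the stochastic order. -/
/-!
A synchronous coupling that is increasing realises `P i` and `P j` on one probability space with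
almost surely ordered outcomes, so expectations of increasing functions are ordered; the only
point to check is that the `i`-th marginal of the coupled kernel is the kernel of `P i`
(`SyncCoupling.map_toKernel`). This holds because, for finite spins, the point-cylinder formula
forces the kernel to be the infinite product of its rules (`PCA.toKernel_eq_infinitePi`).

Conversely, attach an independent uniform variable on `[0, 1]` to each site and feed it to the
quantile functions of all `N` updating rules at once (`quantileCoupling`). Each coordinate has the
required law (`map_quantile`), for arbitrary configurations, and the joint rule is local. If the
tuple is increasing and the configurations are ordered, the cumulative distribution functions of
the rules are ordered (`IncreasingTuple.rule_Iic_le`), hence so are the quantile functions,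
pointwise. Total order of the spin space is what allows one uniform variable to serve all `N`
coordinates.
-/

open MeasureTheory ProbabilityTheory Filter

abbrev Site (d : ℕ) : Type := Fin d → ℤ
abbrev Config (d : ℕ) (S : Type*) : Type _ := Site d → S

/-- Stochastic ordering of measures: `ν₁ ⪯ ν₂` iff `ν₁(f) ≤ ν₂(f)` for every
bounded measurable increasing `f`. -/
def StochLE {α : Type*} [MeasurableSpace α] [Preorder α] (μ ν : Measure α) : Prop :=
  ∀ f : α → ℝ, Measurable f → Monotone f → (∃ C, ∀ x, |f x| ≤ C) →
    ∫ x, f x ∂μ ≤ ∫ x, f x ∂ν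

/-- A (local) PCA dynamics on `S^{ℤ^d}`: a Markov kernel together with its family of
local updating rules, the kernel being the product over sites of the updating rules. -/
structure PCA (d : ℕ) (S : Type*) [MeasurableSpace S] where
  rule : Site d → Config d S → Measure S
  rule_prob : ∀ k η, IsProbabilityMeasure (rule k η)
  rule_local : ∀ k : Site d, ∃ V : Finset (Site d), ∀ η η' : Config d S,
      (∀ j ∈ V, η j = η' j) → rule k η = rule k η'
  toKernel : Kernel (Config d S) (Config d S)
  markov : IsMarkovKernel toKernel
  product : ∀ (η : Config d S) (Λ : Finset (Site d)) (y : Site d → S),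
      toKernel η {σ : Config d S | ∀ k ∈ Λ, σ k = y k} = ∏ k ∈ Λ, rule k η {y k}


/-- An `N`-tuple of PCA dynamics is increasing if ordered configurations give
stochastically ordered transition measures. -/
def IncreasingTuple {d : ℕ} {S : Type*} [MeasurableSpace S] [Preorder S] {N : ℕ}
    (P : Fin N → PCA d S) : Prop :=
  ∀ ζ : Fin N → Config d S, Monotone ζ →
    ∀ i j : Fin N, i ≤ j → StochLE ((P i).toKernel (ζ i)) ((P j).toKernel (ζ j))

/-- A PCA dynamics is attractive if it maps bounded measurable increasing functions to
increasing functions. -/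
def Attractive {d : ℕ} {S : Type*} [MeasurableSpace S] [Preorder S] (P : PCA d S) : Prop :=
  ∀ f : Config d S → ℝ, Measurable f → Monotone f → (∃ C, ∀ x, |f x| ≤ C) →
    Monotone fun η => ∫ σ, f σ ∂(P.toKernel η)

/-- A synchronous coupling of the PCA dynamics `P 1, …, P N`: a PCA on the spin space
`Fin N → S` whose site marginals are the updating rules of the `P i`. -/
structure SyncCoupling {d : ℕ} {S : Type*} [MeasurableSpace S] {N : ℕ}
    (P : Fin N → PCA d S) where
  Q : PCA d (Fin N → S)
  marginal : ∀ (k : Site d) (ζ : Fin N → Config d S) (i : Fin N),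
    ((Q.rule k fun x j => ζ j x).map fun v => v i) = (P i).rule k (ζ i)

/-- A synchronous coupling is increasing when ordered configurations are a.s. mapped to
ordered configurations. -/
def SyncCoupling.Increasing {d : ℕ} {S : Type*} [MeasurableSpace S] [Preorder S] {N : ℕ}
    {P : Fin N → PCA d S} (C : SyncCoupling P) : Prop :=
  ∀ ζ : Fin N → Config d S, Monotone ζ →
    C.Q.toKernel (fun x j => ζ j x) {ω : Config d (Fin N → S) | ∀ x, Monotone (ω x)} = 1

section Aux

variable {d : ℕ} {S : Type*} [MeasurableSpace S]

instance (P : PCA d S) (k : Site d) (η : Config d S) : IsProbabilityMeasure (P.rule k η) :=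
  P.rule_prob k η

instance (P : PCA d S) : IsMarkovKernel P.toKernel := P.markov

/-! ### Product measures and local rules -/

/-- The point-cylinder formula in the definition of a PCA determines the whole kernel when the
spin space is finite. -/
lemma PCA.toKernel_eq_infinitePi [Finite S] [MeasurableSingletonClass S] (P : PCA d S)
    (η : Config d S) : P.toKernel η = Measure.infinitePi (fun k => P.rule k η) := by
  have hne : Nonempty (Config d S) := ⟨η⟩
  -- The two measures have the same finite-dimensional projections: compare singletons.
  have hproj : IsProjectiveLimit (P.toKernel η)
      (fun I : Finset (Site d) => Measure.pi (fun k : I => P.rule k η)) := by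
    intro I
    refine Measure.ext_of_singleton fun a => ?_
    classical
    let y : Site d → S := fun k => if h : k ∈ I then a ⟨k, h⟩ else η k
    have hy : ∀ k (h : k ∈ I), y k = a ⟨k, h⟩ := fun k h => by simp [y, h]
    rw [Measure.map_apply (by fun_prop) (measurableSet_singleton a), Measure.pi_singleton]
    have hset : I.restrict (π := fun _ => S) ⁻¹' ({a} : Set (I → S)) =
        {σ : Config d S | ∀ k ∈ I, σ k = y k} := by
      ext σ
      change I.restrict σ = a ↔ ∀ k ∈ I, σ k = y k
      rw [funext_iff, Subtype.forall]
      exact forall₂_congr fun k h => by rw [hy k h]; rfl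
    rw [hset, P.product η I y, ← Finset.prod_coe_sort]
    exact Finset.prod_congr rfl fun k _ => by rw [hy k k.2]
  exact hproj.unique (Measure.isProjectiveLimit_infinitePi _)

lemma PCA.map_eval_toKernel [Finite S] [MeasurableSingletonClass S] (P : PCA d S)
    (η : Config d S) (k : Site d) : (P.toKernel η).map (fun σ => σ k) = P.rule k η := by
  rw [P.toKernel_eq_infinitePi]
  exact (measurePreserving_eval_infinitePi (fun k => P.rule k η) k).map_eq

/-- A function of finitely many spins, each taking finitely many values, is measurable. -/
lemma measurable_of_local [Finite S] [MeasurableSingletonClass S] {β : Type*}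
    [MeasurableSpace β] (f : Config d S → β) (V : Finset (Site d))
    (hf : ∀ η η' : Config d S, (∀ j ∈ V, η j = η' j) → f η = f η') : Measurable f := by
  rcases isEmpty_or_nonempty (Config d S) with h | ⟨⟨η₀⟩⟩
  · exact measurable_of_empty f
  have hfac : Function.FactorsThrough f (V.restrict (π := fun _ => S)) := fun η η' h =>
    hf η η' fun j hj => congrFun h ⟨j, hj⟩
  have : f = Function.extend (V.restrict (π := fun _ => S)) f (fun _ => f η₀) ∘ V.restrict := by
    ext η
    exact (hfac.extend_apply _ η).symm
  rw [this]
  exact (Measurable.of_discrete).comp (by fun_prop)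

/-- Finite local probability rules assemble, through the infinite product measure, into a PCA. -/
noncomputable def PCA.ofRule [Finite S] [MeasurableSingletonClass S]
    (r : Site d → Config d S → Measure S) (hr : ∀ k η, IsProbabilityMeasure (r k η))
    (hloc : ∀ k : Site d, ∃ V : Finset (Site d), ∀ η η' : Config d S,
      (∀ j ∈ V, η j = η' j) → r k η = r k η') : PCA d S where
  rule := r
  rule_prob := hr
  rule_local := hloc
  toKernel :=
    { toFun := fun η => Measure.infinitePi (fun k => r k η)
      measurable' := by
        have hm : ∀ k, Measurable (r k) := fun k =>
          let ⟨V, hV⟩ := hloc k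
          measurable_of_local _ V hV
        refine Measurable.measure_of_isPiSystem_of_isProbabilityMeasure
          (generateFrom_squareCylinders (α := fun _ : Site d => S)).symm
          (isPiSystem_squareCylinders (fun _ => MeasurableSpace.isPiSystem_measurableSet)
            (by simp)) ?_
        rintro _ ⟨I, t, ht, rfl⟩
        have ht' : ∀ i, MeasurableSet (t i) := fun i => ht i (Set.mem_univ i)
        simp_rw [fun η => Measure.infinitePi_pi (fun k => r k η) (s := I) (fun i _ => ht' i)]
        exact Finset.measurable_prod _ fun k _ => (Measure.measurable_coe (ht' k)).comp (hm k) }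
  markov := ⟨fun η => by
    change IsProbabilityMeasure (Measure.infinitePi (fun k => r k η))
    infer_instance⟩
  product η Λ y := by
    change Measure.infinitePi (fun k => r k η) _ = _
    rw [← Measure.infinitePi_pi (fun k => r k η) (s := Λ) (t := fun k => {y k})
      (fun i _ => measurableSet_singleton _)]
    congr 1

/-- The `i`-th marginal of the kernel of a synchronous coupling is the kernel of `P i`. -/
lemma SyncCoupling.map_toKernel [Finite S] [MeasurableSingletonClass S] {N : ℕ}
    {P : Fin N → PCA d S} (C : SyncCoupling P) (ζ : Fin N → Config d S) (i : Fin N) :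
    (C.Q.toKernel fun x j => ζ j x).map (fun ω x => ω x i) = (P i).toKernel (ζ i) := by
  rw [C.Q.toKernel_eq_infinitePi, (P i).toKernel_eq_infinitePi]
  refine (Measure.infinitePi_map_pi (fun k => C.Q.rule k fun x j => ζ j x)
    (f := fun _ (v : Fin N → S) => v i) (fun _ => measurable_pi_apply i)).trans ?_
  congr 1
  funext k
  exact C.marginal k ζ i

/-! ### Quantile functions on a finite chain -/

variable [Fintype S] [LinearOrder S]

lemma exists_quantile (μ : Measure S) [IsProbabilityMeasure μ]
    (u : unitInterval) : ∃ t : S, ∀ s, t ≤ s ↔ (u : ℝ) ≤ μ.real (Set.Iic s) := by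
  have hne : Nonempty S := nonempty_of_isProbabilityMeasure μ
  obtain ⟨m, hm⟩ := Finite.exists_max (id : S → S)
  have hA : (Finset.univ.filter fun s => (u : ℝ) ≤ μ.real (Set.Iic s)).Nonempty := by
    refine ⟨m, ?_⟩
    have : Set.Iic m = Set.univ := Set.eq_univ_of_forall hm
    simp [this, u.2.2]
  refine ⟨Finset.min' _ hA, fun s => ⟨fun h => ?_, fun h => Finset.min'_le _ _ (by simpa)⟩⟩
  have h1 := Finset.min'_mem _ hA
  rw [Finset.mem_filter] at h1
  exact h1.2.trans (measureReal_mono (Set.Iic_subset_Iic.2 h))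

/-- The quantile function of `μ`: the least `s` whose cumulative mass `μ (Iic s)` is at
least `u`. -/
noncomputable def quantile (μ : Measure S) [IsProbabilityMeasure μ] (u : unitInterval) : S :=
  (exists_quantile μ u).choose

lemma quantile_le_iff (μ : Measure S) [IsProbabilityMeasure μ] (u : unitInterval) (s : S) :
    quantile μ u ≤ s ↔ (u : ℝ) ≤ μ.real (Set.Iic s) :=
  (exists_quantile μ u).choose_spec s

lemma measurable_quantile (μ : Measure S) [IsProbabilityMeasure μ] :
    Measurable (quantile μ) := by
  have hmono : Monotone (quantile μ) := fun u v h => by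
    rw [quantile_le_iff]
    exact (show (u : ℝ) ≤ v from h).trans ((quantile_le_iff μ v _).1 le_rfl)
  refine measurable_to_countable' fun s => ?_
  exact (Set.ordConnected_singleton.preimage_mono hmono).measurableSet

lemma quantile_mono {μ ν : Measure S} [IsProbabilityMeasure μ] [IsProbabilityMeasure ν]
    (h : ∀ s, ν.real (Set.Iic s) ≤ μ.real (Set.Iic s)) (u : unitInterval) :
    quantile μ u ≤ quantile ν u :=
  (quantile_le_iff μ u _).2 (((quantile_le_iff ν u _).1 le_rfl).trans (h _))

variable [MeasurableSingletonClass S]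

/-- A finite measure on a finite chain is determined by its cumulative distribution function. -/
lemma measure_ext_of_Iic_chain (μ ν : Measure S) [IsFiniteMeasure μ]
    (h : ∀ s, μ (Set.Iic s) = ν (Set.Iic s)) : μ = ν := by
  refine Measure.ext_of_singleton fun s => ?_
  induction s using WellFoundedLT.induction with
  | ind s ih =>
    have hsum : ∀ ρ : Measure S,
        ρ (Set.Iic s) = ρ {s} + ∑ t ∈ Finset.univ.filter (· < s), ρ {t} := by
      intro ρ
      have h1 : Set.Iic s = ((insert s (Finset.univ.filter (· < s)) : Finset S) : Set S) := by
        ext t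
        simp [le_iff_eq_or_lt]
      rw [h1, ← sum_measure_singleton, Finset.sum_insert (by simp)]
    have hs := h s
    rw [hsum μ, hsum ν,
      Finset.sum_congr rfl fun t ht => (ih t (Finset.mem_filter.1 ht).2).symm] at hs
    refine (ENNReal.add_left_inj ?_).1 hs
    exact ENNReal.sum_ne_top.2 fun t _ => measure_ne_top μ _

lemma map_quantile (μ : Measure S) [IsProbabilityMeasure μ] :
    (volume : Measure unitInterval).map (quantile μ) = μ := by
  have := Measure.isProbabilityMeasure_map (μ := (volume : Measure unitInterval))
    (measurable_quantile μ).aemeasurable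
  refine measure_ext_of_Iic_chain _ _ fun s => ?_
  have hset : quantile μ ⁻¹' Set.Iic s =
      Set.Iic (⟨μ.real (Set.Iic s), measureReal_nonneg, measureReal_le_one⟩ : unitInterval) := by
    ext u
    exact quantile_le_iff μ u s
  rw [Measure.map_apply (measurable_quantile μ) (Set.toFinite _).measurableSet, hset,
    unitInterval.volume_Iic, ofReal_measureReal]

/-- For an increasing tuple, the cumulative distribution functions of the single-site rules at
ordered configurations are ordered: test the stochastic order on `σ ↦ 1_{s < σ k}`. -/
lemma IncreasingTuple.rule_Iic_le {N : ℕ} {P : Fin N → PCA d S} (h : IncreasingTuple P)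
    {ζ : Fin N → Config d S} (hζ : Monotone ζ) {i j : Fin N} (hij : i ≤ j) (k : Site d) (s : S) :
    ((P j).rule k (ζ j)).real (Set.Iic s) ≤ ((P i).rule k (ζ i)).real (Set.Iic s) := by
  have hS : ∀ A : Set S, MeasurableSet A := fun A => A.toFinite.measurableSet
  have hE : MeasurableSet {σ : Config d S | s < σ k} := measurable_pi_apply k (hS (Set.Ioi s))
  have key := h ζ hζ i j hij ({σ : Config d S | s < σ k}.indicator fun _ => 1)
    (measurable_const.indicator hE)
    (fun σ τ hστ => by
      by_cases hσ : s < σ k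
      · simp [Set.indicator, hσ, hσ.trans_le (hστ k)]
      · simp only [Set.indicator, Set.mem_ofPred_eq, hσ, if_false]
        split_ifs <;> norm_num)
    ⟨1, fun σ => by by_cases hσ : s < σ k <;> simp [Set.indicator, hσ]⟩
  rw [integral_indicator_const _ hE, integral_indicator_const _ hE] at key
  have hrule : ∀ l, ((P l).toKernel (ζ l)).real {σ : Config d S | s < σ k} =
      1 - ((P l).rule k (ζ l)).real (Set.Iic s) := fun l => by
    rw [← probReal_compl_eq_one_sub (hS _), ← (P l).map_eval_toKernel (ζ l) k,
      map_measureReal_apply (measurable_pi_apply k) (hS _)]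
    congr 1
    ext σ
    simp
  rw [hrule, hrule] at key
  simp only [smul_eq_mul, mul_one] at key
  linarith

/-! ### The quantile coupling -/

/-- The joint law at a single site: all `N` quantile functions evaluated at one common uniform
variable. It is defined for arbitrary, not necessarily ordered, configurations. -/
noncomputable def quantileRule {N : ℕ} (P : Fin N → PCA d S) (k : Site d)
    (ξ : Config d (Fin N → S)) : Measure (Fin N → S) :=
  (volume : Measure unitInterval).map
    fun u i => quantile ((P i).rule k fun x => ξ x i) u

lemma measurable_quantile_tuple {N : ℕ} (P : Fin N → PCA d S) (k : Site d)
    (ξ : Config d (Fin N → S)) :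
    Measurable fun (u : unitInterval) (i : Fin N) => quantile ((P i).rule k fun x => ξ x i) u :=
  measurable_pi_lambda _ fun _ => measurable_quantile _

/-- The synchronous coupling driven by independent uniform variables, one at each site. -/
noncomputable def quantileCoupling {N : ℕ} (P : Fin N → PCA d S) : SyncCoupling P where
  Q := PCA.ofRule (quantileRule P)
    (fun k ξ => Measure.isProbabilityMeasure_map (measurable_quantile_tuple P k ξ).aemeasurable)
    (fun k => by
      choose V hV using fun i => (P i).rule_local k
      refine ⟨Finset.univ.biUnion V, fun ξ ξ' hξ => ?_⟩
      have hrule : ∀ i, ((P i).rule k fun x => ξ x i) = (P i).rule k fun x => ξ' x i :=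
        fun i => hV i _ _ fun j hj =>
          congrFun (hξ j (Finset.mem_biUnion.2 ⟨i, Finset.mem_univ i, hj⟩)) i
      unfold quantileRule
      simp_rw [hrule])
  marginal k ζ i := by
    change (quantileRule P k fun x j => ζ j x).map (fun v => v i) = _
    rw [quantileRule, Measure.map_map (measurable_pi_apply i) (measurable_quantile_tuple P k _)]
    exact map_quantile ((P i).rule k (ζ i))

lemma measurableSet_ordered {N : ℕ} :
    MeasurableSet {ω : Config d (Fin N → S) | ∀ x, Monotone (ω x)} := by
  rw [Set.ofPred_forall]
  have hM : MeasurableSet {v : Fin N → S | Monotone v} := (Set.toFinite _).measurableSet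
  exact MeasurableSet.iInter fun x => (measurable_pi_apply x : Measurable
    fun ω : Config d (Fin N → S) => ω x) hM

lemma quantileCoupling_increasing {N : ℕ} {P : Fin N → PCA d S} (h : IncreasingTuple P) :
    (quantileCoupling P).Increasing := by
  intro ζ hζ
  rw [← prob_compl_eq_zero_iff measurableSet_ordered]
  change ∀ᵐ (ω : Config d (Fin N → S)) ∂((quantileCoupling P).Q.toKernel fun x j => ζ j x),
    ∀ x, Monotone (ω x)
  refine ae_all_iff.2 fun k => ?_
  refine ae_of_ae_map (f := fun ω : Config d (Fin N → S) => ω k) (p := fun v => Monotone v)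
    (measurable_pi_apply k).aemeasurable ?_
  rw [PCA.map_eval_toKernel]
  change ∀ᵐ v ∂(quantileRule P k fun x j => ζ j x), Monotone v
  rw [quantileRule, ae_map_iff (measurable_quantile_tuple P k _).aemeasurable
    (Set.toFinite {v : Fin N → S | Monotone v}).measurableSet]
  exact .of_forall fun u i j hij =>
    quantile_mono (fun s => h.rule_Iic_le hζ hij k s) u

lemma SyncCoupling.Increasing.increasingTuple {N : ℕ} {P : Fin N → PCA d S}
    {C : SyncCoupling P} (hC : C.Increasing) : IncreasingTuple P := by
  rintro ζ hζ i j hij f hf hmono ⟨K, hK⟩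
  have hm : ∀ l : Fin N, Measurable fun (ω : Config d (Fin N → S)) x => ω x l := fun l => by
    fun_prop
  have hint : ∀ l : Fin N, Integrable (fun ω : Config d (Fin N → S) => f fun x => ω x l)
      (C.Q.toKernel fun x j => ζ j x) := fun l =>
    Integrable.of_bound (hf.comp (hm l)).aestronglyMeasurable K (.of_forall fun ω => hK _)
  rw [← C.map_toKernel ζ i, ← C.map_toKernel ζ j,
    integral_map (hm i).aemeasurable hf.aestronglyMeasurable,
    integral_map (hm j).aemeasurable hf.aestronglyMeasurable]
  refine integral_mono_ae (hint i) (hint j) ?_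
  have hae : ∀ᵐ ω ∂(C.Q.toKernel fun x j => ζ j x), ∀ x, Monotone (ω x) := by
    exact (prob_compl_eq_zero_iff measurableSet_ordered).2 (hC ζ hζ)
  filter_upwards [hae] with ω hω
  exact hmono fun x => hω x hij

end Aux

/-- For a finite totally ordered spin space, an increasing synchronous
coupling of an `N`-tuple of PCA dynamics exists iff the tuple is increasing. -/
theorem stmt0 {d N : ℕ} (hd : 1 ≤ d) (hN : 2 ≤ N)
    {S : Type} [Fintype S] [LinearOrder S] [MeasurableSpace S] [MeasurableSingletonClass S]
    (P : Fin N → PCA d S) :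
    (∃ C : SyncCoupling P, C.Increasing) ↔ IncreasingTuple P := by
  exact ⟨fun ⟨_, hC⟩ => hC.increasingTuple,
    fun h => ⟨quantileCoupling P, quantileCoupling_increasing h⟩⟩
end

section
/- Let S be a finite totally ordered set and P an attractive, translation-invariant PCA dynamics on S^{Z^d}, and let ρ(n) be the probability, under the increasing coupling P ⪯⊗ P started from (−, +), that the two components disagree at site 0 at time n. Then the sequence (ρ(n))_{n≥1} is decreasing, and P is ergodic if and only if lim_{n→∞} ρ(n) = 0. -/
/-!
The transition law of `P` is a product measure, so it is the image of i.i.d. uniform variables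
under the sitewise quantile transforms of the local rules (`map_step`), and the coupled kernel `Q`
is the image of the same variables under the pair of these transforms (`map_step₂`). In
particular the components of the coupled chain are chains of `P`, and attractiveness makes the
update increasing in the configuration for fixed uniform variables (`step_mono`).

Driving two ordered pairs, one inside the interval spanned by the other, with the same uniform
variables keeps the inner pair inside the outer one. So disagreement of the inner pair forces
disagreement of the outer one, and the disagreement probability is monotone in the interval of
initial conditions (`disagree_mono`). Comparing the pair reached after one step with `(−, +)`
shows that `ρ` is decreasing (`rho_succ_le`).

If `P` is ergodic, the components from `−` and `+` are ordered and have laws with the same weak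
limit, so the difference of the means of a strictly increasing function of the spin at the origin
tends to `0`; it dominates `ρ(n)` (`tendsto_of_ergodic`).

Conversely, translation invariance gives disagreement probability `ρ(n)` at every site. A
continuous function on the compact configuration space depends on finitely many sites up to `ε`,
so its means at time `n` from any initial law and from `−` differ by at most
`ε + C ρ(n)` (`integral_sub_le`). If `ρ → 0`, the chain forgets its initial law uniformly; by the
Markov property the means from `−` are Cauchy, and compactness of the space of probability
measures identifies their limit as integration against a probability measure
(`ergodic_of_tendsto`).
-/


open MeasureTheory ProbabilityTheory Filter

/-- The maximal element of a nonempty finite linear order. -/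
noncomputable def topS (S : Type*) [Fintype S] [LinearOrder S] [Nonempty S] : S :=
  Finset.univ.max' Finset.univ_nonempty


/-- The minimal element of a nonempty finite linear order. -/
noncomputable def botS (S : Type*) [Fintype S] [LinearOrder S] [Nonempty S] : S :=
  Finset.univ.min' Finset.univ_nonempty


/-- The Lévy (generalised inverse) probability transform of the distribution function of
a measure on a finite linear order: `t ↦ min {s : F(s) ≥ t}`. -/
noncomputable def levyInv {S : Type*} [Fintype S] [LinearOrder S] [Nonempty S]
    [MeasurableSpace S] (μ : Measure S) (t : ℝ) : S :=
  letI := Classical.decPred fun s : S => t ≤ (μ {s' | s' ≤ s}).toReal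
  if h : (Finset.univ.filter fun s : S => t ≤ (μ {s' | s' ≤ s}).toReal).Nonempty then
    (Finset.univ.filter fun s : S => t ≤ (μ {s' | s' ≤ s}).toReal).min' h
  else Classical.arbitrary S


/-- The increasing coupling of two probability measures on a finite linear order:
the joint law of `((F_μ)⁻¹(U), (F_ν)⁻¹(U))` for a single uniform `U` on `(0,1)`. -/
noncomputable def couple {S : Type*} [Fintype S] [LinearOrder S] [Nonempty S]
    [MeasurableSpace S] (μ ν : Measure S) : Measure (S × S) :=
  (volume.restrict (Set.Ioo (0 : ℝ) 1)).map fun t => (levyInv μ t, levyInv ν t)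


/-- The law at time `n` of the Markov chain with transition kernel `K` and initial law `μ`. -/
noncomputable def iterLaw {α : Type*} [MeasurableSpace α] (K : Kernel α α) (μ : Measure α) :
    ℕ → Measure α
  | 0 => μ
  | n + 1 => (iterLaw K μ n).bind fun a => K a


/-- Translation invariance (space homogeneity) of a PCA dynamics. -/
def TranslationInvariant {d : ℕ} {S : Type*} [MeasurableSpace S] (P : PCA d S) : Prop :=
  ∀ (k : Site d) (η : Config d S), P.rule k η = P.rule 0 fun x => η (x + k)


section Helpers

variable {d : ℕ}

/-! ### Product measures and iterated laws -/

/-- The mass of cylinders over single configurations determines a law on `T^{ℤ^d}`. -/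
theorem eq_infinitePi_of_cyl {T : Type*} [Fintype T] [MeasurableSpace T]
    [MeasurableSingletonClass T] (μ : Site d → Measure T) [∀ k, IsProbabilityMeasure (μ k)]
    (ν : Measure (Config d T))
    (h : ∀ (Λ : Finset (Site d)) (y : Site d → T),
      ν {σ | ∀ k ∈ Λ, σ k = y k} = ∏ k ∈ Λ, μ k {y k}) :
    ν = Measure.infinitePi μ := by
  refine IsProjectiveLimit.unique (P := fun I : Finset (Site d) => Measure.pi fun i : I => μ i)
    ?_ (Measure.isProjectiveLimit_infinitePi μ)
  intro Λ
  have : Nonempty T := (μ 0).nonempty_of_neZero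
  refine Measure.ext_of_singleton fun z => ?_
  rw [Measure.map_apply (by fun_prop) (measurableSet_singleton z), Measure.pi_singleton]
  classical
  let y : Site d → T := fun k => if hk : k ∈ Λ then z ⟨k, hk⟩ else Classical.arbitrary T
  have hy : ∀ k : Λ, y k = z k := fun k => by simp [y]
  have := h Λ y
  rw [← Finset.prod_coe_sort] at this
  simp only [hy] at this
  rw [← this]
  congr 1
  ext σ
  simp only [Set.mem_preimage, Set.mem_singleton_iff, funext_iff, Set.mem_ofPred_eq]
  constructor
  · intro H k hk
    exact (H ⟨k, hk⟩).trans (hy ⟨k, hk⟩).symm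
  · intro H k
    exact (H k k.2).trans (hy k)

theorem kernel_eq_infinitePi {T : Type*} [Fintype T] [MeasurableSpace T]
    [MeasurableSingletonClass T] (P : PCA d T) (η : Config d T) :
    have := fun k => P.rule_prob k η
    P.toKernel η = Measure.infinitePi (fun k => P.rule k η) := by
  have := fun k => P.rule_prob k η
  exact eq_infinitePi_of_cyl _ _ (P.product η)

/-- The space shift sending `ω` to `ω (· + k)`. -/
def shift {T : Type*} (k : Site d) (ω : Config d T) : Config d T := fun x => ω (x + k)

theorem measurable_shift {T : Type*} [MeasurableSpace T] (k : Site d) :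
    Measurable (shift k : Config d T → Config d T) :=
  measurable_pi_lambda _ fun x => measurable_pi_apply (x + k)

theorem map_shift_kernel {T : Type*} [Fintype T] [MeasurableSpace T]
    [MeasurableSingletonClass T] (Q : PCA d T) (hTI : TranslationInvariant Q) (k : Site d)
    (η : Config d T) : (Q.toKernel η).map (shift k) = Q.toKernel (shift k η) := by
  have := fun j => Q.rule_prob j (shift k η)
  rw [kernel_eq_infinitePi Q (shift k η)]
  refine eq_infinitePi_of_cyl _ _ fun Λ y => ?_
  have hm : MeasurableSet {σ : Config d T | ∀ k ∈ Λ, σ k = y k} := by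
    have : {σ : Config d T | ∀ k ∈ Λ, σ k = y k} = ⋂ k ∈ Λ, (fun σ => σ k) ⁻¹' {y k} := by
      ext; simp
    rw [this]
    exact Finset.measurableSet_biInter _ fun j _ =>
      measurable_pi_apply j (measurableSet_singleton _)
  rw [Measure.map_apply (measurable_shift k) hm]
  have h1 : shift k ⁻¹' {σ : Config d T | ∀ k ∈ Λ, σ k = y k} =
      {σ : Config d T | ∀ j ∈ Λ.map (addRightEmbedding k), σ j = y (j - k)} := by
    ext σ
    simp [shift]
  rw [h1]
  refine (Q.product η (Λ.map (addRightEmbedding k)) fun j => y (j - k)).trans ?_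
  rw [Finset.prod_map]
  refine Finset.prod_congr rfl fun j _ => ?_
  have h2 : Q.rule (j + k) η = Q.rule j (shift k η) := by
    rw [hTI (j + k) η, hTI j (shift k η)]
    simp only [shift, add_assoc]
  simp [h2]

/-- First-step decomposition, as opposed to the last-step recursion defining `iterLaw`. -/
theorem iterLaw_succ' {α : Type*} [MeasurableSpace α] (K : Kernel α α) (μ : Measure α) (n : ℕ) :
    iterLaw K μ (n + 1) = iterLaw K (μ.bind fun a => K a) n := by
  induction n with
  | zero => rfl
  | succ n ih =>
    change (iterLaw K μ (n + 1)).bind _ = (iterLaw K (μ.bind fun a => K a) n).bind _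
    rw [ih]

theorem iterLaw_add {α : Type*} [MeasurableSpace α] (K : Kernel α α) (μ : Measure α) (m n : ℕ) :
    iterLaw K μ (n + m) = iterLaw K (iterLaw K μ m) n := by
  induction n with
  | zero => simp [iterLaw]
  | succ n ih =>
    rw [Nat.succ_add]
    change (iterLaw K μ (n + m)).bind _ = (iterLaw K (iterLaw K μ m) n).bind _
    rw [ih]

/-- The `n`-step transition kernel. -/
noncomputable def iterK {α : Type*} [MeasurableSpace α] (K : Kernel α α) : ℕ → Kernel α α
  | 0 => Kernel.id
  | n + 1 => K ∘ₖ iterK K n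

theorem iterLaw_eq_bind {α : Type*} [MeasurableSpace α] (K : Kernel α α) (μ : Measure α) (n : ℕ) :
    iterLaw K μ n = μ.bind fun a => iterK K n a := by
  induction n with
  | zero =>
    ext s hs
    simp only [iterLaw, iterK]
    rw [Measure.bind_apply hs (Kernel.measurable _).aemeasurable]
    simp [Kernel.id_apply, Measure.dirac_apply' _ hs, lintegral_indicator_one hs]
  | succ n ih =>
    simp only [iterLaw, iterK, ih]
    rw [Measure.bind_bind (Kernel.measurable _).aemeasurable (Kernel.measurable _).aemeasurable]
    rfl

theorem iterLaw_dirac {α : Type*} [MeasurableSpace α] (K : Kernel α α) (a : α) (n : ℕ) :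
    iterLaw K (Measure.dirac a) n = iterK K n a := by
  rw [iterLaw_eq_bind, Measure.dirac_bind (Kernel.measurable _)]

theorem iterK_succ_apply {α : Type*} [MeasurableSpace α] (K : Kernel α α) (n : ℕ) (a : α)
    {s : Set α} (hs : MeasurableSet s) :
    iterK K (n + 1) a s = ∫⁻ b, iterK K n b s ∂(K a) := by
  rw [← iterLaw_dirac, iterLaw_succ', Measure.dirac_bind (Kernel.measurable _), iterLaw_eq_bind,
    Measure.bind_apply hs (Kernel.measurable _).aemeasurable]

theorem iterLaw_prob {α : Type*} [MeasurableSpace α] (K : Kernel α α) [IsMarkovKernel K]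
    (μ : Measure α) [IsProbabilityMeasure μ] (n : ℕ) : IsProbabilityMeasure (iterLaw K μ n) := by
  induction n with
  | zero => assumption
  | succ n ih =>
    change IsProbabilityMeasure ((iterLaw K μ n).bind K)
    infer_instance

/-- A measurable map intertwining two kernels intertwines the laws of the two chains. -/
theorem iterLaw_map {α β : Type*} [MeasurableSpace α] [MeasurableSpace β] (K : Kernel α α)
    (L : Kernel β β) {φ : α → β} (hφ : Measurable φ) (h : ∀ a, (K a).map φ = L (φ a))
    (μ : Measure α) (n : ℕ) : (iterLaw K μ n).map φ = iterLaw L (μ.map φ) n := by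
  induction n with
  | zero => rfl
  | succ n ih =>
    simp only [iterLaw, ← ih]
    ext s hs
    rw [Measure.map_apply hφ hs, Measure.bind_apply (hφ hs) (Kernel.measurable _).aemeasurable,
      Measure.bind_apply hs (Kernel.measurable _).aemeasurable,
      lintegral_map (Kernel.measurable_coe L hs) hφ]
    refine lintegral_congr fun a => ?_
    rw [← h a, Measure.map_apply hφ hs]

/-- A measurable set that is absorbing for `K` carries the law of the chain at all times. -/
theorem iterK_ae {α : Type*} [MeasurableSpace α] (K : Kernel α α) {s : Set α}
    (hs : MeasurableSet s) (h : ∀ a ∈ s, ∀ᵐ b ∂K a, b ∈ s) (n : ℕ) :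
    ∀ a ∈ s, ∀ᵐ b ∂iterK K n a, b ∈ s := by
  induction n with
  | zero =>
    intro a ha
    simp only [iterK, Kernel.id_apply]
    exact (ae_dirac_iff (p := fun b => b ∈ s) hs).2 ha
  | succ n ih =>
    intro a ha
    change iterK K (n + 1) a sᶜ = 0
    rw [iterK_succ_apply K n a hs.compl, lintegral_eq_zero_iff (Kernel.measurable_coe _ hs.compl)]
    filter_upwards [h a ha] with b hb using ih b hb

/-! ### The quantile transform on a finite linear order -/

section Quantile

variable {S : Type*} [Fintype S] [LinearOrder S] [Nonempty S] [MeasurableSpace S]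
  [MeasurableSingletonClass S]

/-- The uniform law on `(0,1)`. -/
noncomputable abbrev unif : Measure ℝ := volume.restrict (Set.Ioo (0 : ℝ) 1)

instance unif_prob : IsProbabilityMeasure unif := ⟨by simp [unif]⟩

omit [MeasurableSingletonClass S] in
theorem measurable_levyInv (μ : Measure S) : Measurable (levyInv μ) := by
  classical
  let φ : (S → Prop) → S := fun A =>
    if h : (Finset.univ.filter fun s : S => A s).Nonempty then
      (Finset.univ.filter fun s : S => A s).min' h else Classical.arbitrary S
  have h1 : levyInv μ = φ ∘ fun t s => t ≤ (μ {s' | s' ≤ s}).toReal := by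
    funext t
    simp only [levyInv, φ, Function.comp]
  rw [h1]
  refine (measurable_of_countable φ).comp (measurable_pi_lambda _ fun s => ?_)
  exact measurableSet_setOfPred.1 measurableSet_Iic

omit [MeasurableSingletonClass S] in
/-- The Galois connection characterising the generalised inverse. -/
theorem levyInv_le_iff (μ : Measure S) [IsProbabilityMeasure μ] {t : ℝ} (ht : t ∈ Set.Ioo (0:ℝ) 1)
    (s : S) : levyInv μ t ≤ s ↔ t ≤ (μ {s' | s' ≤ s}).toReal := by
  classical
  have hne : (Finset.univ.filter fun s : S => t ≤ (μ {s' | s' ≤ s}).toReal).Nonempty := by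
    refine ⟨topS S, ?_⟩
    have : {s' : S | s' ≤ topS S} = Set.univ := by
      ext x
      simp [topS, Finset.le_max']
    simp [this, ht.2.le]
  have heq : levyInv μ t =
      (Finset.univ.filter fun s : S => t ≤ (μ {s' | s' ≤ s}).toReal).min' hne := by
    unfold levyInv
    rw [dif_pos (by convert hne)]
  rw [heq]
  constructor
  · intro h
    have := Finset.min'_mem _ hne
    refine (Finset.mem_filter.1 this).2.trans ?_
    exact ENNReal.toReal_mono (measure_ne_top _ _) (measure_mono fun x hx => le_trans hx h)
  · intro h
    exact Finset.min'_le _ _ (by simpa using h)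

omit [Nonempty S] in
theorem measure_ext_Iic (μ ν : Measure S) [IsFiniteMeasure μ]
    (h : ∀ a, μ (Set.Iic a) = ν (Set.Iic a)) : μ = ν := by
  let : TopologicalSpace S := ⊥
  have : DiscreteTopology S := ⟨rfl⟩
  let : LocallyFiniteOrder S := Fintype.toLocallyFiniteOrder
  let : SuccOrder S := LinearLocallyFiniteOrder.succOrder S
  let : PredOrder S := LinearLocallyFiniteOrder.predOrder S
  exact Measure.ext_of_Iic μ ν h

/-- Inverse transform sampling. -/
theorem map_levyInv (μ : Measure S) [IsProbabilityMeasure μ] : unif.map (levyInv μ) = μ := by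
  have := Measure.isProbabilityMeasure_map (μ := unif) (measurable_levyInv μ).aemeasurable
  refine measure_ext_Iic _ _ fun s => ?_
  have hs : MeasurableSet (Set.Iic s) := (Set.toFinite _).measurableSet
  rw [Measure.map_apply (measurable_levyInv μ) hs,
    Measure.restrict_apply (measurable_levyInv μ hs)]
  have h1 : levyInv μ ⁻¹' Set.Iic s ∩ Set.Ioo 0 1 =
      Set.Iic (μ (Set.Iic s)).toReal ∩ Set.Ioo 0 1 := by
    ext t
    simp only [Set.mem_inter_iff, Set.mem_preimage, Set.mem_Iic, and_congr_left_iff]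
    intro ht
    exact levyInv_le_iff μ ht s
  have hle : (μ (Set.Iic s)).toReal ≤ 1 := ENNReal.toReal_le_of_le_ofReal zero_le_one
    (by simpa using prob_le_one)
  have h2 : volume (Set.Iic (μ (Set.Iic s)).toReal ∩ Set.Ioo 0 1) =
      volume (Set.Ioc 0 (μ (Set.Iic s)).toReal) := by
    refine (measure_congr (ae_eq_set_inter (ae_eq_refl _) Ioo_ae_eq_Ioc)).trans ?_
    congr 1
    ext t
    simp only [Set.mem_inter_iff, Set.mem_Iic, Set.mem_Ioc]
    constructor
    · rintro ⟨a, b, c⟩; exact ⟨b, a⟩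
    · rintro ⟨a, b⟩; exact ⟨b, a, b.trans hle⟩
  rw [h1, h2, Real.volume_Ioc, sub_zero, ENNReal.ofReal_toReal (measure_ne_top _ _)]

end Quantile

/-! ### The increasing coupling driven by uniform variables -/

section Coupling

variable {S : Type*} [Fintype S] [LinearOrder S] [Nonempty S] [MeasurableSpace S]
  [MeasurableSingletonClass S]

/-- The law of a family of independent uniform variables indexed by the sites. -/
noncomputable abbrev unifs (d : ℕ) : Measure (Site d → ℝ) := Measure.infinitePi fun _ => unif

/-- The synchronous update: each site applies the quantile transform of its local rule to its
own uniform variable. -/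
noncomputable def step (P : PCA d S) (η : Config d S) (u : Site d → ℝ) : Config d S :=
  fun k => levyInv (P.rule k η) (u k)

/-- The pair of updates of the two components, driven by the same uniform variables. -/
noncomputable def step₂ (P : PCA d S) (ω : Config d (S × S)) (u : Site d → ℝ) :
    Config d (S × S) :=
  fun k => (levyInv (P.rule k fun x => (ω x).1) (u k), levyInv (P.rule k fun x => (ω x).2) (u k))

/-- `Q` is the increasing coupling of `P` with itself. -/
def IsCoupling (P : PCA d S) (Q : PCA d (S × S)) : Prop :=
  ∀ (k : Site d) (η : Config d (S × S)),
      Q.rule k η = couple (P.rule k fun x => (η x).1) (P.rule k fun x => (η x).2)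

/-- The first-component configuration. -/
def fstC (ω : Config d (S × S)) : Config d S := fun x => (ω x).1

/-- The second-component configuration. -/
def sndC (ω : Config d (S × S)) : Config d S := fun x => (ω x).2

omit [Fintype S] [LinearOrder S] [Nonempty S] [MeasurableSingletonClass S] in
theorem measurable_fstC : Measurable (fstC : Config d (S × S) → Config d S) :=
  measurable_pi_lambda _ fun x => (measurable_pi_apply x).fst

omit [Fintype S] [LinearOrder S] [Nonempty S] [MeasurableSingletonClass S] in
theorem measurable_sndC : Measurable (sndC : Config d (S × S) → Config d S) :=
  measurable_pi_lambda _ fun x => (measurable_pi_apply x).snd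

omit [MeasurableSingletonClass S] in
theorem measurable_step (P : PCA d S) (η : Config d S) : Measurable (step P η) :=
  measurable_pi_lambda _ fun x => (measurable_levyInv _).comp (measurable_pi_apply x)

omit [MeasurableSingletonClass S] in
theorem measurable_step₂ (P : PCA d S) (ω : Config d (S × S)) : Measurable (step₂ P ω) :=
  measurable_pi_lambda _ fun x => ((measurable_levyInv _).comp (measurable_pi_apply x)).prodMk
    ((measurable_levyInv _).comp (measurable_pi_apply x))

theorem map_step (P : PCA d S) (η : Config d S) : (unifs d).map (step P η) = P.toKernel η := by
  have := fun k => P.rule_prob k η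
  rw [kernel_eq_infinitePi]
  refine (Measure.infinitePi_map_pi (μ := fun _ : Site d => unif)
    (f := fun k => levyInv (P.rule k η)) fun k => measurable_levyInv _).trans ?_
  simp only [map_levyInv]

theorem map_step₂ {P : PCA d S} {Q : PCA d (S × S)} (hQ : IsCoupling P Q)
    (ω : Config d (S × S)) : (unifs d).map (step₂ P ω) = Q.toKernel ω := by
  have := fun k => Q.rule_prob k ω
  rw [kernel_eq_infinitePi]
  refine (Measure.infinitePi_map_pi (μ := fun _ : Site d => unif)
    (f := fun k t => (levyInv (P.rule k fun x => (ω x).1) t,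
      levyInv (P.rule k fun x => (ω x).2) t)) fun k =>
        (measurable_levyInv _).prodMk (measurable_levyInv _)).trans ?_
  simp only [hQ _ _, couple]

theorem map_fstC {P : PCA d S} {Q : PCA d (S × S)} (hQ : IsCoupling P Q)
    (ω : Config d (S × S)) : (Q.toKernel ω).map fstC = P.toKernel (fstC ω) := by
  rw [← map_step₂ hQ, Measure.map_map measurable_fstC (measurable_step₂ P ω), ← map_step]
  rfl

theorem map_sndC {P : PCA d S} {Q : PCA d (S × S)} (hQ : IsCoupling P Q)
    (ω : Config d (S × S)) : (Q.toKernel ω).map sndC = P.toKernel (sndC ω) := by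
  rw [← map_step₂ hQ, Measure.map_map measurable_sndC (measurable_step₂ P ω), ← map_step]
  rfl

omit [MeasurableSingletonClass S] in
theorem translationInvariant_coupling {P : PCA d S} {Q : PCA d (S × S)} (hQ : IsCoupling P Q)
    (hTI : TranslationInvariant P) : TranslationInvariant Q := by
  intro k η
  rw [hQ, hQ, hTI k, hTI k]

omit [Nonempty S] in
/-- For an attractive dynamics the distribution function of the local rule is decreasing in the
configuration. -/
theorem rule_Iic_anti {P : PCA d S} (hA : Attractive P) {η η' : Config d S} (h : η ≤ η')
    (k : Site d) (s : S) : P.rule k η' {s' | s' ≤ s} ≤ P.rule k η {s' | s' ≤ s} := by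
  classical
  have hP := P.rule_prob
  have hev : ∀ ζ, (P.toKernel ζ) {σ | σ k ≤ s} = P.rule k ζ {s' | s' ≤ s} := fun ζ => by
    have hp := fun k => hP k ζ
    rw [kernel_eq_infinitePi, ← Measure.infinitePi_map_eval (fun k => P.rule k ζ) k,
      Measure.map_apply (measurable_pi_apply k) (Set.toFinite _).measurableSet]
    rfl
  have hms : MeasurableSet {σ : Config d S | σ k ≤ s} :=
    (measurable_pi_apply k : Measurable fun σ : Config d S => σ k)
      (Set.toFinite {s' | s' ≤ s}).measurableSet
  have hm := P.markov
  have key := hA (Set.indicator {σ : Config d S | σ k ≤ s}ᶜ 1)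
    (measurable_one.indicator hms.compl) ?_ ⟨1, ?_⟩ h
  · simp only [integral_indicator_one hms.compl, probReal_compl_eq_one_sub hms] at key
    rw [← hev, ← hev]
    exact (ENNReal.toReal_le_toReal (measure_ne_top _ _) (measure_ne_top _ _)).1
      (by simp only [Measure.real] at key; linarith)
  · intro σ σ' hσ
    by_cases h1 : σ k ≤ s
    · rw [Set.indicator_of_notMem (by simpa using h1)]
      exact Set.indicator_nonneg (by simp) _
    · have h2 : ¬ σ' k ≤ s := fun h2 => h1 ((hσ k).trans h2)
      simp [Set.indicator, h1, h2]
  · intro x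
    by_cases h1 : x k ≤ s <;> simp [Set.indicator, h1]

omit [MeasurableSingletonClass S] in
theorem levyInv_mono (μ ν : Measure S) [IsProbabilityMeasure μ] [IsProbabilityMeasure ν]
    (h : ∀ s, ν {s' | s' ≤ s} ≤ μ {s' | s' ≤ s}) {t : ℝ} (ht : t ∈ Set.Ioo (0 : ℝ) 1) :
    levyInv μ t ≤ levyInv ν t := by
  rw [levyInv_le_iff μ ht]
  exact ((levyInv_le_iff ν ht _).1 le_rfl).trans
    (ENNReal.toReal_mono (measure_ne_top _ _) (h _))

theorem unifs_mem (d : ℕ) : ∀ᵐ u ∂unifs d, ∀ k, u k ∈ Set.Ioo (0 : ℝ) 1 := by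
  rw [ae_all_iff]
  intro k
  refine (measurePreserving_eval_infinitePi (fun _ : Site d => unif) k).quasiMeasurePreserving.ae
    (p := fun t => t ∈ Set.Ioo (0 : ℝ) 1) ?_
  exact ae_restrict_mem measurableSet_Ioo

theorem step_mono {P : PCA d S} (hA : Attractive P) {η η' : Config d S} (h : η ≤ η')
    {u : Site d → ℝ} (hu : ∀ k, u k ∈ Set.Ioo (0 : ℝ) 1) : step P η u ≤ step P η' u := by
  intro k
  have := P.rule_prob k η
  have := P.rule_prob k η'
  exact levyInv_mono _ _ (rule_Iic_anti hA h k) (hu k)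

/-- The pairs whose first component lies below the second. -/
def Ordered (d : ℕ) (S : Type*) [LinearOrder S] : Set (Config d (S × S)) := {ω | fstC ω ≤ sndC ω}

omit [Nonempty S] in
theorem measurableSet_ordered_s16 : MeasurableSet (Ordered d S) := by
  have : Ordered d S = ⋂ k, (fun ω : Config d (S × S) => ω k) ⁻¹' {p | p.1 ≤ p.2} := by
    ext ω
    simp [Ordered, Pi.le_def, fstC, sndC]
  rw [this]
  exact MeasurableSet.iInter fun k => measurable_pi_apply k (Set.toFinite _).measurableSet

theorem kernel_ordered {P : PCA d S} {Q : PCA d (S × S)} (hQ : IsCoupling P Q)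
    (hA : Attractive P) (ω : Config d (S × S)) (hω : ω ∈ Ordered d S) :
    ∀ᵐ ω' ∂Q.toKernel ω, ω' ∈ Ordered d S := by
  rw [← map_step₂ hQ]
  refine (ae_map_iff (measurable_step₂ P ω).aemeasurable measurableSet_ordered_s16).2 ?_
  filter_upwards [unifs_mem d] with u hu using step_mono hA hω hu

/-- The configurations whose two components disagree at the site `k`. -/
def Disagree (S : Type*) (k : Site d) : Set (Config d (S × S)) := {ω | (ω k).1 ≠ (ω k).2}

omit [LinearOrder S] [Nonempty S] in
theorem measurableSet_disagree (k : Site d) : MeasurableSet (Disagree S k) :=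
  (measurable_pi_apply k : Measurable fun ω : Config d (S × S) => ω k)
    (Set.toFinite {p : S × S | p.1 ≠ p.2}).measurableSet

/-- The disagreement probability at time `n` is monotone in the interval spanned by the two
initial components: the two pairs can be driven by the same uniform variables, which keeps the
inner pair inside the outer one. -/
theorem disagree_mono {P : PCA d S} {Q : PCA d (S × S)} (hQ : IsCoupling P Q)
    (hA : Attractive P) (k : Site d) (n : ℕ) (τ σ : Config d (S × S))
    (h1 : fstC σ ≤ fstC τ) (h2 : fstC τ ≤ sndC τ) (h3 : sndC τ ≤ sndC σ) :
    iterK Q.toKernel n τ (Disagree S k) ≤ iterK Q.toKernel n σ (Disagree S k) := by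
  have hm := measurableSet_disagree (S := S) k
  induction n generalizing τ σ with
  | zero =>
    simp only [iterK, Kernel.id_apply]
    rw [Measure.dirac_apply' _ hm, Measure.dirac_apply' _ hm]
    by_cases hτ : τ ∈ Disagree S k
    · have hσ : σ ∈ Disagree S k := fun he =>
        hτ (le_antisymm (h2 k) ((h3 k).trans (he.symm.le.trans (h1 k))))
      simp [hτ, hσ]
    · simp [hτ]
  | succ n ih =>
    rw [iterK_succ_apply _ _ _ hm, iterK_succ_apply _ _ _ hm, ← map_step₂ hQ, ← map_step₂ hQ,
      lintegral_map (Kernel.measurable_coe _ hm) (measurable_step₂ P τ),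
      lintegral_map (Kernel.measurable_coe _ hm) (measurable_step₂ P σ)]
    refine lintegral_mono_ae ?_
    filter_upwards [unifs_mem d] with u hu
    exact ih _ _ (step_mono hA h1 hu) (step_mono hA h2 hu) (step_mono hA h3 hu)

/-- The initial pair `(−, +)`. -/
noncomputable def extremal (d : ℕ) (S : Type*) [Fintype S] [LinearOrder S] [Nonempty S] :
    Config d (S × S) := fun _ => (botS S, topS S)

theorem botS_le {S : Type*} [Fintype S] [LinearOrder S] [Nonempty S] (s : S) : botS S ≤ s :=
  Finset.min'_le _ _ (Finset.mem_univ _)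

theorem le_topS {S : Type*} [Fintype S] [LinearOrder S] [Nonempty S] (s : S) : s ≤ topS S :=
  Finset.le_max' _ _ (Finset.mem_univ _)

/-- After one step from `(−, +)` the pair is ordered, hence inside `(−, +)` itself, so `n` further
steps make it disagree at most as often as the pair started from `(−, +)`. -/
theorem rho_succ_le {P : PCA d S} {Q : PCA d (S × S)} (hQ : IsCoupling P Q)
    (hA : Attractive P) (n : ℕ) :
    iterK Q.toKernel (n + 1) (extremal d S) (Disagree S 0) ≤
      iterK Q.toKernel n (extremal d S) (Disagree S 0) := by
  have := Q.markov
  rw [iterK_succ_apply _ _ _ (measurableSet_disagree 0)]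
  have h : ∀ᵐ ω ∂Q.toKernel (extremal d S), iterK Q.toKernel n ω (Disagree S 0) ≤
      iterK Q.toKernel n (extremal d S) (Disagree S 0) := by
    filter_upwards [kernel_ordered hQ hA (extremal d S) fun _ => botS_le _] with ω hω
    exact disagree_mono hQ hA 0 n _ _ (fun _ => botS_le _) hω (fun _ => le_topS _)
  refine (lintegral_mono_ae h).trans ?_
  simp

/-- By translation invariance the disagreement probability is the same at every site. -/
theorem disagree_site {P : PCA d S} {Q : PCA d (S × S)} (hQ : IsCoupling P Q)
    (hTI : TranslationInvariant P) (k : Site d) (n : ℕ) :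
    iterK Q.toKernel n (extremal d S) (Disagree S k) =
      iterK Q.toKernel n (extremal d S) (Disagree S 0) := by
  have h := iterLaw_map Q.toKernel Q.toKernel (measurable_shift k)
    (map_shift_kernel Q (translationInvariant_coupling hQ hTI) k)
    (Measure.dirac (extremal d S)) n
  have he : shift k (extremal d S) = extremal d S := rfl
  rw [Measure.map_dirac' (measurable_shift k), he] at h
  rw [iterLaw_dirac] at h
  conv_rhs => rw [← h, Measure.map_apply (measurable_shift k) (measurableSet_disagree 0)]
  congr 1
  ext ω
  simp [Disagree, shift]

end Coupling

/-! ### Convergence of the laws -/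

section Convergence

variable {S : Type*} [Fintype S] [LinearOrder S] [Nonempty S] [MeasurableSpace S]
  [MeasurableSingletonClass S]

theorem iterLaw_fstC {P : PCA d S} {Q : PCA d (S × S)} (hQ : IsCoupling P Q)
    (μ : Measure (Config d (S × S))) (n : ℕ) :
    (iterLaw Q.toKernel μ n).map fstC = iterLaw P.toKernel (μ.map fstC) n :=
  iterLaw_map _ _ measurable_fstC (map_fstC hQ) μ n

theorem iterLaw_sndC {P : PCA d S} {Q : PCA d (S × S)} (hQ : IsCoupling P Q)
    (μ : Measure (Config d (S × S))) (n : ℕ) :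
    (iterLaw Q.toKernel μ n).map sndC = iterLaw P.toKernel (μ.map sndC) n :=
  iterLaw_map _ _ measurable_sndC (map_sndC hQ) μ n

variable [TopologicalSpace S] [DiscreteTopology S]

omit [LinearOrder S] [Nonempty S] in
theorem borelSpace_config : BorelSpace (Config d S) := by
  have : BorelSpace S := ⟨by
    borelize S
    ext s
    exact ⟨fun _ => (isOpen_discrete s).measurableSet, fun _ => (Set.toFinite s).measurableSet⟩⟩
  have : SecondCountableTopology S := inferInstance
  exact Pi.borelSpace

omit [LinearOrder S] [Nonempty S] [MeasurableSpace S] [MeasurableSingletonClass S] in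
/-- A continuous function on the configuration space is, up to `ε`, determined by finitely many
sites. -/
theorem exists_almost_local {f : Config d S → ℝ} (hf : Continuous f) {ε : ℝ} (hε : 0 < ε) :
    ∃ Λ : Finset (Site d), ∀ σ σ' : Config d S, (∀ k ∈ Λ, σ k = σ' k) → |f σ' - f σ| ≤ ε := by
  classical
  have h1 : ∀ σ : Config d S, ∃ I : Finset (Site d), ∀ σ' : Config d S,
      (∀ k ∈ I, σ' k = σ k) → |f σ' - f σ| < ε / 2 := by
    intro σ
    have ho : IsOpen (f ⁻¹' Metric.ball (f σ) (ε / 2)) := Metric.isOpen_ball.preimage hf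
    obtain ⟨I, u, hu, hI⟩ := isOpen_pi_iff.1 ho σ (by simp [hε])
    refine ⟨I, fun σ' h => ?_⟩
    have : σ' ∈ (I : Set (Site d)).pi u := fun k hk => by rw [h k hk]; exact (hu k hk).2
    simpa [Real.dist_eq] using hI this
  choose I hI using h1
  obtain ⟨t, ht⟩ := CompactSpace.elim_nhds_subcover
    (fun σ : Config d S => (I σ : Set (Site d)).pi fun k => {σ k})
    (fun σ => set_pi_mem_nhds (I σ).finite_toSet fun k _ => by simp)
  refine ⟨t.biUnion I, fun σ σ' h => ?_⟩
  have hσ : σ ∈ ⋃ x ∈ t, (I x : Set (Site d)).pi fun k => {x k} := by rw [ht]; trivial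
  simp only [Set.mem_iUnion] at hσ
  obtain ⟨x, hx, hσx⟩ := hσ
  have a1 := hI x σ fun k hk => hσx k hk
  have a2 := hI x σ' fun k hk =>
    (h k (Finset.mem_biUnion.2 ⟨x, hx, hk⟩)).symm.trans (hσx k hk)
  rw [abs_lt] at a1 a2
  rw [abs_le]
  constructor <;> linarith

/-- The coupling bound: the laws at time `n` from an arbitrary initial law and from `−` integrate
an almost local function to nearly the same value once disagreement is unlikely. -/
theorem integral_sub_le {P : PCA d S} {Q : PCA d (S × S)} (hQ : IsCoupling P Q)
    (hA : Attractive P) (hTI : TranslationInvariant P)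
    (f : BoundedContinuousFunction (Config d S) ℝ) {ε : ℝ} {Λ : Finset (Site d)}
    (hε : 0 ≤ ε)
    (hΛ : ∀ σ σ' : Config d S, (∀ k ∈ Λ, σ k = σ' k) → |f σ' - f σ| ≤ ε)
    (lam : Measure (Config d S)) [IsProbabilityMeasure lam] (n : ℕ) :
    |∫ x, f x ∂iterLaw P.toKernel lam n -
      ∫ x, f x ∂iterLaw P.toKernel (Measure.dirac fun _ => botS S) n| ≤
      ε + Λ.card * (2 * ‖f‖ * (iterK Q.toKernel n (extremal d S) (Disagree S 0)).toReal) := by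
  classical
  have := borelSpace_config (d := d) (S := S)
  have := Q.markov
  have := P.markov
  let φ : Config d S → Config d (S × S) := fun σ x => (botS S, σ x)
  have hφ : Measurable φ :=
    measurable_pi_lambda _ fun x => measurable_const.prodMk (measurable_pi_apply x)
  have := Measure.isProbabilityMeasure_map (μ := lam) hφ.aemeasurable
  set L := iterLaw Q.toKernel (lam.map φ) n with hL
  have hLp : IsProbabilityMeasure L := iterLaw_prob _ _ _
  have e1 : L.map fstC = iterLaw P.toKernel (Measure.dirac fun _ => botS S) n := by
    rw [hL, iterLaw_fstC hQ, Measure.map_map measurable_fstC hφ]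
    have : (fstC ∘ φ : Config d S → Config d S) = fun _ _ => botS S := rfl
    rw [this, Measure.map_const, measure_univ, one_smul]
  have e2 : L.map sndC = iterLaw P.toKernel lam n := by
    rw [hL, iterLaw_sndC hQ, Measure.map_map measurable_sndC hφ]
    have : (sndC ∘ φ : Config d S → Config d S) = id := rfl
    rw [this, Measure.map_id]
  have hfm : Measurable f := f.continuous.measurable
  rw [← e1, ← e2, integral_map measurable_sndC.aemeasurable hfm.aestronglyMeasurable,
    integral_map measurable_fstC.aemeasurable hfm.aestronglyMeasurable]
  have i1 : Integrable (fun ω => f (fstC ω)) L :=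
    Integrable.of_bound (hfm.comp measurable_fstC).aestronglyMeasurable ‖f‖
      (Eventually.of_forall fun _ => f.norm_coe_le_norm _)
  have i2 : Integrable (fun ω => f (sndC ω)) L :=
    Integrable.of_bound (hfm.comp measurable_sndC).aestronglyMeasurable ‖f‖
      (Eventually.of_forall fun _ => f.norm_coe_le_norm _)
  have hD : ∀ k, L.real (Disagree S k) ≤
      (iterK Q.toKernel n (extremal d S) (Disagree S 0)).toReal := by
    intro k
    have hm := measurableSet_disagree (S := S) k
    refine ENNReal.toReal_mono (ne_top_of_le_ne_top ENNReal.one_ne_top ?_) ?_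
    · rw [← iterLaw_dirac]
      have := iterLaw_prob Q.toKernel (Measure.dirac (extremal d S)) n
      exact prob_le_one
    · rw [hL, iterLaw_eq_bind, Measure.bind_apply hm (Kernel.measurable _).aemeasurable,
        lintegral_map (Kernel.measurable_coe _ hm) hφ, ← disagree_site hQ hTI k n]
      refine (lintegral_mono fun σ => disagree_mono hQ hA k n (φ σ) (extremal d S)
        (fun _ => le_rfl) (fun _ => botS_le _) (fun _ => le_topS _)).trans ?_
      simp
  have hint : ∀ k ∈ Λ, Integrable (Set.indicator (Disagree S k) fun _ => 2 * ‖f‖) L := fun k _ =>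
    (integrable_const _).indicator (measurableSet_disagree k)
  rw [← integral_sub i2 i1]
  calc |∫ ω, (f (sndC ω) - f (fstC ω)) ∂L|
      ≤ ∫ ω, |f (sndC ω) - f (fstC ω)| ∂L := abs_integral_le_integral_abs
    _ ≤ ∫ ω, (ε + ∑ k ∈ Λ, Set.indicator (Disagree S k) (fun _ => 2 * ‖f‖) ω) ∂L := by
        refine integral_mono (i2.sub i1).abs
          ((integrable_const _).add (integrable_finsetSum _ hint)) fun ω => ?_
        have hnn : ∀ k ∈ Λ, 0 ≤ Set.indicator (Disagree S k) (fun _ => 2 * ‖f‖) ω :=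
          fun k _ => Set.indicator_nonneg (fun _ _ => by positivity) _
        by_cases h : ∀ k ∈ Λ, fstC ω k = sndC ω k
        · exact (hΛ _ _ h).trans (le_add_of_nonneg_right (Finset.sum_nonneg hnn))
        · push Not at h
          obtain ⟨k, hk, hne⟩ := h
          have h2 : Set.indicator (Disagree S k) (fun _ => 2 * ‖f‖) ω = 2 * ‖f‖ :=
            Set.indicator_of_mem hne _
          have h3 := Finset.single_le_sum hnn hk
          rw [h2] at h3
          have h4 : |f (sndC ω) - f (fstC ω)| ≤ 2 * ‖f‖ := by
            have := f.dist_le_two_norm (sndC ω) (fstC ω)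
            rwa [Real.dist_eq] at this
          exact h4.trans (h3.trans (le_add_of_nonneg_left hε))
    _ = ε + ∑ k ∈ Λ, 2 * ‖f‖ * L.real (Disagree S k) := by
        rw [integral_add (integrable_const _) (integrable_finsetSum _ hint),
          integral_finsetSum _ hint]
        simp [integral_indicator_const, measurableSet_disagree, mul_comm]
    _ ≤ _ := by
        have := Finset.sum_le_sum fun k (_ : k ∈ Λ) =>
          mul_le_mul_of_nonneg_left (hD k) (by positivity : 0 ≤ 2 * ‖f‖)
        simp only [Finset.sum_const, nsmul_eq_mul] at this
        linarith

/-- When the disagreement probability vanishes, the chain forgets its initial law, uniformly. -/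
theorem eventually_integral_sub_le {P : PCA d S} {Q : PCA d (S × S)} (hQ : IsCoupling P Q)
    (hA : Attractive P) (hTI : TranslationInvariant P)
    (hρ : Tendsto (fun n => iterK Q.toKernel n (extremal d S) (Disagree S 0)) atTop (nhds 0))
    (f : BoundedContinuousFunction (Config d S) ℝ) {ε : ℝ} (hε : 0 < ε) :
    ∀ᶠ n in atTop, ∀ lam : Measure (Config d S), IsProbabilityMeasure lam →
      |∫ x, f x ∂iterLaw P.toKernel lam n -
        ∫ x, f x ∂iterLaw P.toKernel (Measure.dirac fun _ => botS S) n| < ε := by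
  obtain ⟨Λ, hΛ⟩ := exists_almost_local f.continuous (half_pos hε)
  have h1 : Tendsto (fun n => ε / 2 + Λ.card *
      (2 * ‖f‖ * (iterK Q.toKernel n (extremal d S) (Disagree S 0)).toReal)) atTop
      (nhds (ε / 2 + Λ.card * (2 * ‖f‖ * (0 : ENNReal).toReal))) :=
    ((((ENNReal.tendsto_toReal ENNReal.zero_ne_top).comp hρ).const_mul _).const_mul _).const_add _
  have h2 : ε / 2 + Λ.card * (2 * ‖f‖ * (0 : ENNReal).toReal) < ε := by simp [hε]
  filter_upwards [h1.eventually (gt_mem_nhds h2)] with n hn lam _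
  exact (integral_sub_le hQ hA hTI f (half_pos hε).le hΛ lam n).trans_lt hn

/-- Vanishing disagreement implies ergodicity; the limit law is a limit point of the laws of the
chain started from `−`. -/
theorem ergodic_of_tendsto {P : PCA d S} {Q : PCA d (S × S)} (hQ : IsCoupling P Q)
    (hA : Attractive P) (hTI : TranslationInvariant P)
    (hρ : Tendsto (fun n => iterK Q.toKernel n (extremal d S) (Disagree S 0)) atTop (nhds 0)) :
    ∃ ν : Measure (Config d S), IsProbabilityMeasure ν ∧
        ∀ σ : Config d S, ∀ f : BoundedContinuousFunction (Config d S) ℝ,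
          Tendsto (fun n => ∫ x, f x ∂iterLaw P.toKernel (Measure.dirac σ) n)
            atTop (nhds (∫ x, f x ∂ν)) := by
  have := borelSpace_config (d := d) (S := S)
  have := P.markov
  set δ : Measure (Config d S) := Measure.dirac fun _ => botS S with hδ
  have hp : ∀ n, IsProbabilityMeasure (iterLaw P.toKernel δ n) := fun n => iterLaw_prob _ _ _
  let lam : ℕ → ProbabilityMeasure (Config d S) := fun n => ⟨iterLaw P.toKernel δ n, hp n⟩
  -- Compactness of the space of probability measures provides the limit along an ultrafilter.
  let U : Ultrafilter ℕ := Ultrafilter.of atTop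
  have hU : (U : Filter ℕ) ≤ atTop := Ultrafilter.of_le _
  obtain ⟨ν, -, hν⟩ := isCompact_univ.ultrafilter_le_nhds (U.map lam) (by simp)
  have hνt : Tendsto lam U (nhds ν) := hν
  rw [ProbabilityMeasure.tendsto_iff_forall_integral_tendsto] at hνt
  refine ⟨ν, inferInstance, fun σ f => ?_⟩
  have hosc := fun (ε : ℝ) (hε : 0 < ε) => eventually_integral_sub_le hQ hA hTI hρ f hε
  have hbot : Tendsto (fun n => ∫ x, f x ∂iterLaw P.toKernel δ n) atTop
      (nhds (∫ x, f x ∂(ν : Measure (Config d S)))) := by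
    -- The law at time `n + m` from `−` is the law at time `n` from the law at time `m`, so
    -- uniform forgetting makes the sequence Cauchy.
    have hc : CauchySeq fun n => ∫ x, f x ∂iterLaw P.toKernel δ n := by
      rw [Metric.cauchySeq_iff']
      intro ε hε
      obtain ⟨N, hN⟩ := (hosc ε hε).exists
      refine ⟨N, fun n hn => ?_⟩
      have := hN (iterLaw P.toKernel δ (n - N)) (hp _)
      rwa [← iterLaw_add, Nat.add_sub_cancel' hn] at this
    obtain ⟨l, hl⟩ := cauchySeq_tendsto_of_complete hc
    rwa [← tendsto_nhds_unique (hνt f) (hl.mono_left hU)] at hl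
  have hdiff : Tendsto (fun n => ∫ x, f x ∂iterLaw P.toKernel (Measure.dirac σ) n -
      ∫ x, f x ∂iterLaw P.toKernel δ n) atTop (nhds 0) := by
    rw [Metric.tendsto_nhds]
    intro ε hε
    filter_upwards [hosc ε hε] with n hn
    simpa [Real.dist_eq] using hn (Measure.dirac σ) inferInstance
  simpa using hdiff.add hbot

/-- The number of elements strictly below `s`: a strictly increasing function, each of whose
jumps is at least `1`. -/
noncomputable def rank (s : S) : ℝ := ((Finset.univ.filter fun x : S => x < s).card : ℝ)

omit [Nonempty S] [MeasurableSpace S] [MeasurableSingletonClass S] [TopologicalSpace S]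
  [DiscreteTopology S] in
theorem rank_mono {a b : S} (h : a ≤ b) : rank a ≤ rank b := by
  unfold rank
  exact_mod_cast Finset.card_le_card fun x hx => by
    simp only [Finset.mem_filter_univ] at hx ⊢
    exact hx.trans_le h

omit [Nonempty S] [MeasurableSpace S] [MeasurableSingletonClass S] [TopologicalSpace S]
  [DiscreteTopology S] in
theorem rank_add_one_le {a b : S} (h : a < b) : rank a + 1 ≤ rank b := by
  unfold rank
  have : (Finset.univ.filter fun x : S => x < a).card < (Finset.univ.filter fun x => x < b).card :=
    Finset.card_lt_card (Finset.ssubset_iff_of_subset (fun x hx => by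
      simp only [Finset.mem_filter_univ] at hx ⊢
      exact hx.trans h) |>.2 ⟨a, by simpa using h, by simp⟩)
  exact_mod_cast this

/-- Ergodicity implies vanishing disagreement: since the coupled components stay ordered, the
disagreement probability is at most the difference of the mean ranks at the origin, whose two
terms have the same limit. -/
theorem tendsto_of_ergodic {P : PCA d S} {Q : PCA d (S × S)} (hQ : IsCoupling P Q)
    (hA : Attractive P)
    (h : ∃ ν : Measure (Config d S), IsProbabilityMeasure ν ∧
        ∀ σ : Config d S, ∀ f : BoundedContinuousFunction (Config d S) ℝ,
          Tendsto (fun n => ∫ x, f x ∂iterLaw P.toKernel (Measure.dirac σ) n)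
            atTop (nhds (∫ x, f x ∂ν))) :
    Tendsto (fun n => iterK Q.toKernel n (extremal d S) (Disagree S 0)) atTop (nhds 0) := by
  obtain ⟨ν, -, hν⟩ := h
  have := borelSpace_config (d := d) (S := S)
  have := Q.markov
  let f : BoundedContinuousFunction (Config d S) ℝ := BoundedContinuousFunction.mkOfCompact
    ⟨fun σ => rank (σ 0), (continuous_of_discreteTopology (f := rank)).comp (continuous_apply 0)⟩
  have hfm : Measurable f := f.continuous.measurable
  have hlim := ((hν (fun _ => topS S) f).sub (hν (fun _ => botS S) f))
  rw [sub_self] at hlim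
  have hlim' := (ENNReal.continuous_ofReal.tendsto 0).comp hlim
  rw [ENNReal.ofReal_zero] at hlim'
  refine tendsto_of_tendsto_of_tendsto_of_le_of_le tendsto_const_nhds hlim'
    (fun _ => zero_le) fun n => ?_
  set L := iterK Q.toKernel n (extremal d S) with hL
  have hL' : L = iterLaw Q.toKernel (Measure.dirac (extremal d S)) n := (iterLaw_dirac _ _ _).symm
  have hLp : IsProbabilityMeasure L := hL' ▸ iterLaw_prob _ _ _
  have e1 : iterLaw P.toKernel (Measure.dirac fun _ => botS S) n = L.map fstC := by
    rw [hL', iterLaw_fstC hQ, Measure.map_dirac' measurable_fstC]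
    rfl
  have e2 : iterLaw P.toKernel (Measure.dirac fun _ => topS S) n = L.map sndC := by
    rw [hL', iterLaw_sndC hQ, Measure.map_dirac' measurable_sndC]
    rfl
  have i1 : Integrable (fun ω => f (fstC ω)) L :=
    Integrable.of_bound (hfm.comp measurable_fstC).aestronglyMeasurable ‖f‖
      (Eventually.of_forall fun _ => f.norm_coe_le_norm _)
  have i2 : Integrable (fun ω => f (sndC ω)) L :=
    Integrable.of_bound (hfm.comp measurable_sndC).aestronglyMeasurable ‖f‖
      (Eventually.of_forall fun _ => f.norm_coe_le_norm _)
  have hm := measurableSet_disagree (S := S) (0 : Site d)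
  have hord : ∀ᵐ ω ∂L, ω ∈ Ordered d S :=
    iterK_ae Q.toKernel measurableSet_ordered_s16 (kernel_ordered hQ hA) n _ fun _ => botS_le _
  simp only [Function.comp]
  rw [e1, e2, integral_map measurable_sndC.aemeasurable hfm.aestronglyMeasurable,
    integral_map measurable_fstC.aemeasurable hfm.aestronglyMeasurable, ← integral_sub i2 i1,
    ENNReal.le_ofReal_iff_toReal_le (measure_ne_top _ _)]
  · change L.real _ ≤ _
    rw [← integral_indicator_one hm]
    refine integral_mono_ae ((integrable_const 1).indicator hm) (i2.sub i1) ?_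
    filter_upwards [hord] with ω hω
    have hle : (ω 0).1 ≤ (ω 0).2 := hω 0
    change Set.indicator _ _ ω ≤ rank (ω 0).2 - rank (ω 0).1
    by_cases hne : ω ∈ Disagree S 0
    · rw [Set.indicator_of_mem hne]
      have := rank_add_one_le (lt_of_le_of_ne hle hne)
      simp only [Pi.one_apply]
      linarith
    · rw [Set.indicator_of_notMem hne]
      linarith [rank_mono hle]
  · refine integral_nonneg_of_ae ?_
    filter_upwards [hord] with ω hω
    exact sub_nonneg.2 (rank_mono (hω 0))

end Convergence
end Helpers

/-- The disagreement probability `ρ(n)` at the origin under the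
increasing coupling `P ⪯⊗ P` started from `(−,+)` is decreasing in `n`, and the PCA is
ergodic iff `ρ(n) → 0`. -/
theorem stmt16 {d : ℕ} (hd : 1 ≤ d)
    {S : Type} [Fintype S] [LinearOrder S] [Nonempty S]
    [MeasurableSpace S] [MeasurableSingletonClass S]
    [TopologicalSpace S] [DiscreteTopology S]
    (P : PCA d S) (hA : Attractive P) (hTI : TranslationInvariant P)
    (Q : PCA d (S × S))
    (hQ : ∀ (k : Site d) (η : Config d (S × S)),
      Q.rule k η = couple (P.rule k fun x => (η x).1) (P.rule k fun x => (η x).2)) :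
    (∀ m n : ℕ, 1 ≤ m → m ≤ n →
      iterLaw Q.toKernel (Measure.dirac fun _ => (botS S, topS S)) n
          {ω : Config d (S × S) | (ω 0).1 ≠ (ω 0).2} ≤
        iterLaw Q.toKernel (Measure.dirac fun _ => (botS S, topS S)) m
          {ω : Config d (S × S) | (ω 0).1 ≠ (ω 0).2}) ∧
    ((∃ ν : Measure (Config d S), IsProbabilityMeasure ν ∧
        ∀ σ : Config d S, ∀ f : BoundedContinuousFunction (Config d S) ℝ,
          Tendsto (fun n => ∫ x, f x ∂iterLaw P.toKernel (Measure.dirac σ) n)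
            atTop (nhds (∫ x, f x ∂ν))) ↔
      Tendsto
        (fun n => iterLaw Q.toKernel (Measure.dirac fun _ => (botS S, topS S)) n
          {ω : Config d (S × S) | (ω 0).1 ≠ (ω 0).2})
        atTop (nhds 0)) := by
  have hρ : ∀ n, iterLaw Q.toKernel (Measure.dirac fun _ => (botS S, topS S)) n
      {ω : Config d (S × S) | (ω 0).1 ≠ (ω 0).2} =
      iterK Q.toKernel n (extremal d S) (Disagree S 0) := fun n => by
    rw [iterLaw_dirac]
    rfl
  simp only [hρ]
  refine ⟨fun m n _ hmn => ?_, tendsto_of_ergodic hQ hA, ergodic_of_tendsto hQ hA hTI⟩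
  exact antitone_nat_of_succ_le (f := fun n => iterK Q.toKernel n (extremal d S) (Disagree S 0))
    (rho_succ_le hQ hA) hmn
end
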